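/- arXiv:2601.19283 — 2 statements merged into one kernel-verified Lean document; each statement's English description precedes it below -/
import Mathlib

section
/- For each choice of sign ±, the genus-number-refined densities sum to the total cubic field densities: Σ_{k≥0} α_k^± = C^± / (12 ζ(3)), and Σ_{k≥0} β_k^± = 4 ζ(1/3) K^± / (5 Γ(2/3)^3 ζ(5/3)), where both series converge absolutely. -/
/-!
Summing over `k` removes the condition on the number of prime factors `≡ 1 (mod 3)`, so that
`Σ A_k` and `Σ B_k` are sums over all squarefree integers prime to `3`
(`hasSum_tsum_SFk`); by multiplicativity they equal `∏_{p ≠ 3} (1 + a_p)` and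
`∏_{p ≠ 3} (1 + b_p)` (`hasProd_sqfreeExt`). Convergence comes from `a_f, b_f ≤ f⁻²`.

For the first series, `1 + a_p = (1 - p⁻³) / (1 - p⁻²)`, hence
`Σ A_k = (12 / 13) ζ(2) / ζ(3)`. For the second, with `x = p ^ (1/3)`,
`(1 - (x + 1) / (x³ (x³ + 1))) (1 + b_p) = 1 - x⁻⁵`, so the infinite product in `betak` is
`1 / (ζ(5/3) (1 + b_3) Σ B_k)` (`tprod_beta`). The shifted term `A_{k-1}` (resp. `B_{k-1}`) has
the same sum as `A_k` (resp. `B_k`), and what remains is arithmetic at the prime `3`.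
-/

open scoped Classical

noncomputable section

def ap (p : ℕ) : ℝ := 1 / (p * ((p : ℝ) + 1))

def bp (p : ℕ) : ℝ :=
  1 / ((p : ℝ) ^ 2 + (p : ℝ) ^ ((4 : ℝ) / 3) + p + (p : ℝ) ^ ((2 : ℝ) / 3))

def np (p : ℕ) : ℝ := if p % 3 = 1 then 3 else 1

def Cpm (sgn : ℤ) : ℝ := if sgn = 1 then 1 else 3
def Kpm (sgn : ℤ) : ℝ := if sgn = 1 then 1 else Real.sqrt 3

def zeta2 : ℝ := (riemannZeta 2).re
def zeta13 : ℝ := (riemannZeta (1 / 3)).re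
def gamma23 : ℝ := Real.Gamma (2 / 3)

/-- `ψ(n)`: the number of prime divisors `p ≡ 1 (mod 3)` of `n`. -/
def psi (n : ℕ) : ℕ := (n.primeFactors.filter fun p => p % 3 = 1).card

/-- Squarefree positive integers coprime to `3` with exactly `k` prime factors
`p ≡ 1 (mod 3)`. -/
def SFk (k : ℕ) : Set ℕ := {f | 0 < f ∧ Squarefree f ∧ ¬(3 ∣ f) ∧ psi f = k}

def aF (f : ℕ) : ℝ := ∏ p ∈ f.primeFactors, ap p
def bF (f : ℕ) : ℝ := ∏ p ∈ f.primeFactors, bp p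

def Ak (k : ℕ) : ℝ := ∑' f : SFk k, aF f
def Bk (k : ℕ) : ℝ := ∑' f : SFk k, bF f

def alphak (sgn : ℤ) (k : ℕ) : ℝ :=
  Cpm sgn / (324 * zeta2) *
    (29 * Ak k + (1 / 4) * (if k = 0 then 0 else Ak (k - 1)))

def betak (sgn : ℤ) (k : ℕ) : ℝ :=
  (4 * zeta13 * Kpm sgn) /
      (45 * (11 * (9 : ℝ) ^ ((1 : ℝ) / 3) - 3) * gamma23 ^ 3) *
    (∏' p : Nat.Primes, (1 - ((p : ℝ) ^ ((1 : ℝ) / 3) + 1) / (p * ((p : ℝ) + 1)))) *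
    ((107 * (9 : ℝ) ^ ((1 : ℝ) / 3) - 35) * Bk k +
      ((9 : ℝ) ^ ((1 : ℝ) / 3) - 1) * (if k = 0 then 0 else Bk (k - 1)))

def alphaPM (sgn : ℤ) : ℝ :=
  (119 * Cpm sgn) / (1404 * zeta2) * ∏' p : Nat.Primes, (1 + np p * ap p)

def betaPM (sgn : ℤ) : ℝ :=
  (2 * (55 * (9 : ℝ) ^ ((1 : ℝ) / 3) - 19) * Kpm sgn * zeta13) /
      (45 * (3 * (9 : ℝ) ^ ((1 : ℝ) / 3) - 1) * gamma23 ^ 3) *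
    ∏' p : Nat.Primes,
      ((1 - ((p : ℝ) ^ ((1 : ℝ) / 3) + 1) / (p * ((p : ℝ) + 1))) * (1 + np p * bp p))

def zeta3 : ℝ := (riemannZeta 3).re
def zeta53 : ℝ := (riemannZeta (5 / 3)).re

/-! ### Sums over squarefree integers prime to three -/

/-- The function `f ↦ ∏_{p ∣ f} g p` on squarefree `f` prime to `3`, extended by zero to all
of `ℕ`. For `g = ap` and `g = bp` it extends `aF` and `bF`. -/
def sqfreeExt (g : ℕ → ℝ) (n : ℕ) : ℝ :=
  if Squarefree n ∧ ¬ 3 ∣ n then ∏ p ∈ n.primeFactors, g p else 0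

section SqfreeExt

variable {g : ℕ → ℝ}

lemma sqfreeExt_nonneg (h0 : ∀ p, 0 ≤ g p) (n : ℕ) : 0 ≤ sqfreeExt g n := by
  unfold sqfreeExt
  split_ifs
  · exact Finset.prod_nonneg fun p _ => h0 p
  · exact le_rfl

lemma sqfreeExt_le (h0 : ∀ p, 0 ≤ g p) (h1 : ∀ p, g p ≤ 1 / (p : ℝ) ^ 2) (n : ℕ) :
    sqfreeExt g n ≤ 1 / (n : ℝ) ^ 2 := by
  unfold sqfreeExt
  split_ifs with h
  · calc ∏ p ∈ n.primeFactors, g p ≤ ∏ p ∈ n.primeFactors, 1 / (p : ℝ) ^ 2 :=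
          Finset.prod_le_prod (fun p _ => h0 p) (fun p _ => h1 p)
      _ = 1 / (n : ℝ) ^ 2 := by
          simp only [one_div, Finset.prod_inv_distrib, Finset.prod_pow]
          rw [← Nat.cast_prod, Nat.prod_primeFactors_of_squarefree h.1]
  · positivity

lemma summable_sqfreeExt (h0 : ∀ p, 0 ≤ g p) (h1 : ∀ p, g p ≤ 1 / (p : ℝ) ^ 2) :
    Summable (sqfreeExt g) :=
  Summable.of_nonneg_of_le (sqfreeExt_nonneg h0) (sqfreeExt_le h0 h1)
    (Real.summable_one_div_nat_pow.2 one_lt_two)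

lemma sqfreeExt_one : sqfreeExt g 1 = 1 := by
  simp [sqfreeExt]

lemma sqfreeExt_mul {m n : ℕ} (hmn : m.Coprime n) :
    sqfreeExt g (m * n) = sqfreeExt g m * sqfreeExt g n := by
  unfold sqfreeExt
  have hsq := Nat.squarefree_mul hmn
  have h3 := Nat.prime_three.dvd_mul (m := m) (n := n)
  rw [hmn.primeFactors_mul, Finset.prod_union hmn.disjoint_primeFactors]
  by_cases h1 : Squarefree m ∧ ¬ 3 ∣ m <;> by_cases h2 : Squarefree n ∧ ¬ 3 ∣ n
  · rw [if_pos h1, if_pos h2, if_pos (by tauto)]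
  · rw [if_neg h2, if_neg (by tauto), mul_zero]
  · rw [if_neg h1, if_neg (by tauto), zero_mul]
  · rw [if_neg h1, if_neg (by tauto), zero_mul]

lemma tsum_sqfreeExt_prime_pow (p : Nat.Primes) :
    ∑' e : ℕ, sqfreeExt g ((p : ℕ) ^ e) = 1 + if (p : ℕ) = 3 then 0 else g p := by
  have hp := p.2
  rw [tsum_eq_sum (s := Finset.range 2)]
  · simp only [Finset.sum_range_succ, Finset.sum_range_zero, pow_zero, pow_one, zero_add,
      sqfreeExt_one]
    congr 1
    unfold sqfreeExt
    rw [hp.primeFactors, Finset.prod_singleton]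
    by_cases h : (p : ℕ) = 3
    · simp [h]
    · rw [if_pos ⟨hp.prime.squarefree,
        fun h' => h ((Nat.prime_dvd_prime_iff_eq Nat.prime_three hp).1 h').symm⟩, if_neg h]
  · intro e he
    have he : 2 ≤ e := by simpa [Nat.succ_le_iff] using he
    unfold sqfreeExt
    rw [if_neg]
    rintro ⟨h, -⟩
    have := ((Nat.squarefree_pow_iff hp.ne_one (by omega)).1 h).2
    omega

/-- The Euler product `Σ_f g_f = ∏_{p ≠ 3} (1 + g p)` over squarefree `f` prime to `3`. -/
lemma hasProd_sqfreeExt (h0 : ∀ p, 0 ≤ g p) (h1 : ∀ p, g p ≤ 1 / (p : ℝ) ^ 2) :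
    HasProd (fun p : Nat.Primes => 1 + if (p : ℕ) = 3 then 0 else g p)
      (∑' n, sqfreeExt g n) := by
  have h := EulerProduct.eulerProduct_hasProd (f := sqfreeExt g) sqfreeExt_one
    (fun {m n} => sqfreeExt_mul) (summable_sqfreeExt h0 h1).norm (by simp [sqfreeExt])
  simpa only [tsum_sqfreeExt_prime_pow] using h

lemma one_le_tsum_sqfreeExt (h0 : ∀ p, 0 ≤ g p) (h1 : ∀ p, g p ≤ 1 / (p : ℝ) ^ 2) :
    1 ≤ ∑' n, sqfreeExt g n := by
  have := (summable_sqfreeExt h0 h1).le_tsum 1 (fun n _ => sqfreeExt_nonneg h0 n)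
  rwa [sqfreeExt_one] at this

/-- Sorting squarefree integers prime to `3` by their number `k` of prime factors
`≡ 1 (mod 3)`. -/
lemma hasSum_tsum_SFk (h0 : ∀ p, 0 ≤ g p) (h1 : ∀ p, g p ≤ 1 / (p : ℝ) ^ 2) :
    HasSum (fun k => ∑' f : SFk k, ∏ p ∈ (f : ℕ).primeFactors, g p) (∑' n, sqfreeExt g n) := by
  have hs := summable_sqfreeExt h0 h1
  have h := (Equiv.sigmaFiberEquiv psi).hasSum_iff.2 hs.hasSum
  refine h.sigma fun k => ?_
  have hk : ∑' f : SFk k, ∏ p ∈ (f : ℕ).primeFactors, g p =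
      ∑' f : {n // psi n = k}, sqfreeExt g f := by
    rw [tsum_subtype (SFk k) (fun f => ∏ p ∈ f.primeFactors, g p)]
    refine Eq.trans (tsum_congr fun n => ?_) (tsum_subtype {n | psi n = k} (sqfreeExt g)).symm
    by_cases hn : psi n = k
    · rw [Set.indicator_of_mem (show n ∈ {n | psi n = k} from hn), sqfreeExt,
        Set.indicator_apply]
      refine if_congr ?_ rfl rfl
      exact ⟨fun h => ⟨h.2.1, h.2.2.1⟩,
        fun h => ⟨Nat.pos_of_ne_zero h.1.ne_zero, h.1, h.2, hn⟩⟩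
    · rw [Set.indicator_of_notMem (show n ∉ {n | psi n = k} from hn),
        Set.indicator_of_notMem (fun h : n ∈ SFk k => hn h.2.2.2)]
  rw [hk]
  exact (hs.comp_injective Subtype.val_injective).hasSum

end SqfreeExt

/-- The index shift `k ↦ k - 1`, with the convention that the term of index `-1` is zero. -/
lemma hasSum_shift {u : ℕ → ℝ} {S : ℝ} (h : HasSum u S) :
    HasSum (fun k : ℕ => if k = 0 then 0 else u (k - 1)) S := by
  rw [← hasSum_nat_add_iff' 1]
  simpa using h

/-! ### The zeta function at real arguments -/

/-- `n ↦ n ^ (-s)` as a completely multiplicative function on `ℕ`. -/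
def rpowNegHom (s : ℝ) (hs : s ≠ 0) : ℕ →*₀ ℝ where
  toFun n := (n : ℝ) ^ (-s)
  map_zero' := by simp [Real.zero_rpow (neg_ne_zero.2 hs)]
  map_one' := by simp
  map_mul' m n := by
    push_cast
    exact Real.mul_rpow (Nat.cast_nonneg m) (Nat.cast_nonneg n)

/-- Over `ℝ`, the Euler product of `ζ(s)` for real `s > 1`, and `ζ(s) > 0`. -/
lemma zeta_real {s : ℝ} (hs : 1 < s) :
    HasProd (fun p : Nat.Primes => (1 - ((p : ℕ) : ℝ) ^ (-s))⁻¹) (riemannZeta s).re ∧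
      0 < (riemannZeta s).re := by
  have hs0 : s ≠ 0 := by linarith
  have hsum : Summable fun n : ℕ => (n : ℝ) ^ (-s) := Real.summable_nat_rpow.2 (by linarith)
  have hz : (riemannZeta s).re = ∑' n : ℕ, (n : ℝ) ^ (-s) := by
    rw [zeta_eq_tsum_one_div_nat_cpow (by simpa using hs)]
    have : ∀ n : ℕ, 1 / (n : ℂ) ^ (s : ℂ) = (((n : ℝ) ^ (-s) : ℝ) : ℂ) := fun n => by
      rw [Complex.ofReal_cpow (Nat.cast_nonneg n)]
      push_cast
      rw [Complex.cpow_neg, one_div]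
    simp only [this]
    rw [← Complex.ofReal_tsum, Complex.ofReal_re]
  rw [hz]
  refine ⟨EulerProduct.eulerProduct_completely_multiplicative_hasProd
    (f := rpowNegHom s hs0) hsum.norm, ?_⟩
  have := hsum.le_tsum 1 (fun n _ => by positivity)
  simp only [Nat.cast_one, Real.one_rpow] at this
  linarith

lemma zeta2_spec : HasProd (fun p : Nat.Primes => (1 - ((p : ℕ) : ℝ) ^ (-2 : ℝ))⁻¹) zeta2 ∧
    0 < zeta2 := by
  simpa [zeta2] using zeta_real (s := 2) (by norm_num)

lemma zeta3_spec : HasProd (fun p : Nat.Primes => (1 - ((p : ℕ) : ℝ) ^ (-3 : ℝ))⁻¹) zeta3 ∧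
    0 < zeta3 := by
  simpa [zeta3] using zeta_real (s := 3) (by norm_num)

lemma zeta53_spec :
    HasProd (fun p : Nat.Primes => (1 - ((p : ℕ) : ℝ) ^ (-(5 / 3) : ℝ))⁻¹) zeta53 ∧
    0 < zeta53 := by
  simpa [zeta53] using zeta_real (s := 5 / 3) (by norm_num)

/-! ### The two Euler product identities -/

lemma ap_nonneg (p : ℕ) : 0 ≤ ap p := by unfold ap; positivity

lemma ap_le (p : ℕ) : ap p ≤ 1 / (p : ℝ) ^ 2 := by
  rcases Nat.eq_zero_or_pos p with rfl | hp
  · simp [ap]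
  · have : (0 : ℝ) < p := by exact_mod_cast hp
    unfold ap
    gcongr
    nlinarith

lemma bp_nonneg (p : ℕ) : 0 ≤ bp p := by unfold bp; positivity

lemma bp_le (p : ℕ) : bp p ≤ 1 / (p : ℝ) ^ 2 := by
  rcases Nat.eq_zero_or_pos p with rfl | hp
  · have h : (0 : ℝ) ^ ((4 : ℝ) / 3) = 0 := Real.zero_rpow (by norm_num)
    have h' : (0 : ℝ) ^ ((2 : ℝ) / 3) = 0 := Real.zero_rpow (by norm_num)
    simp [bp, h, h']
  · have : (0 : ℝ) < p := by exact_mod_cast hp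
    unfold bp
    gcongr
    have h1 : (0 : ℝ) ≤ (p : ℝ) ^ ((4 : ℝ) / 3) := by positivity
    have h2 : (0 : ℝ) ≤ (p : ℝ) ^ ((2 : ℝ) / 3) := by positivity
    linarith

/-- The factor at `3` on its own, used to restore the prime missing from `hasProd_sqfreeExt`. -/
lemma hasProd_at_three (c : ℝ) :
    HasProd (fun p : Nat.Primes => if (p : ℕ) = 3 then c else 1) c := by
  have h := hasProd_single (f := fun p : Nat.Primes => if (p : ℕ) = 3 then c else 1)
    (⟨3, Nat.prime_three⟩ : Nat.Primes)
    (fun q hq => if_neg fun h => hq (Subtype.ext h))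
  simpa using h

lemma hasProd_one_add {g : ℕ → ℝ} (h0 : ∀ p, 0 ≤ g p) (h1 : ∀ p, g p ≤ 1 / (p : ℝ) ^ 2) :
    HasProd (fun p : Nat.Primes => 1 + g p) ((∑' n, sqfreeExt g n) * (1 + g 3)) := by
  convert (hasProd_sqfreeExt h0 h1).mul (hasProd_at_three (1 + g 3)) using 2 with p
  by_cases h : (p : ℕ) = 3 <;> simp [h]

/-- `∏_p (1 + ap p) = ζ(2) / ζ(3)`, because `1 + ap p = (1 - p⁻³) / (1 - p⁻²)`. -/
lemma tsum_ap : (∑' n, sqfreeExt ap n) * (1 + ap 3) * zeta3 = zeta2 := by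
  have h := (hasProd_one_add ap_nonneg ap_le).mul zeta3_spec.1
  refine h.unique ?_
  convert zeta2_spec.1 using 2 with p
  have hp : (1 : ℝ) < (p : ℕ) := by exact_mod_cast p.2.one_lt
  unfold ap
  generalize ((p : ℕ) : ℝ) = x at hp
  have e2 : x ^ (-2 : ℝ) = (x ^ 2)⁻¹ := by
    rw [Real.rpow_neg (by linarith)]; norm_num
  have e3 : x ^ (-3 : ℝ) = (x ^ 3)⁻¹ := by
    rw [Real.rpow_neg (by linarith)]; norm_num
  have hx : x ≠ 0 := by linarith
  have hx1 : x + 1 ≠ 0 := by linarith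
  have d2 : x ^ 2 - 1 ≠ 0 := by nlinarith
  have d3 : x ^ 3 - 1 ≠ 0 := (sub_pos.2 (one_lt_pow₀ hp (by norm_num))).ne'
  have f2 : 1 - (x ^ 2)⁻¹ = (x ^ 2 - 1) / x ^ 2 := by field_simp
  have f3 : 1 - (x ^ 3)⁻¹ = (x ^ 3 - 1) / x ^ 3 := by field_simp
  rw [e2, e3, f2, f3, inv_div, inv_div]
  field_simp
  ring

/-- Coordinates `x = p ^ (1/3)` in which all the fractional powers become integral. -/
lemma exists_cbrt (p : ℕ) (hp : 1 < p) : ∃ x : ℝ, 1 < x ∧ (p : ℝ) = x ^ 3 ∧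
    (p : ℝ) ^ ((1 : ℝ) / 3) = x ∧ (p : ℝ) ^ ((4 : ℝ) / 3) = x ^ 4 ∧
    (p : ℝ) ^ ((2 : ℝ) / 3) = x ^ 2 ∧ (p : ℝ) ^ (-(5 / 3) : ℝ) = (x ^ 5)⁻¹ := by
  have hp1 : (1 : ℝ) < p := by exact_mod_cast hp
  have hp0 : (0 : ℝ) ≤ p := by linarith
  refine ⟨(p : ℝ) ^ ((1 : ℝ) / 3), Real.one_lt_rpow hp1 (by norm_num), ?_, rfl, ?_, ?_, ?_⟩
  · rw [← Real.rpow_mul_natCast hp0]; norm_num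
  · rw [← Real.rpow_mul_natCast hp0]; norm_num
  · rw [← Real.rpow_mul_natCast hp0]; norm_num
  · rw [← Real.rpow_mul_natCast hp0, Real.rpow_neg hp0]; norm_num

/-- The local factor of the infinite product in `betak`, times `1 + bp p`, is
`1 - p ^ (-5/3)`. -/
lemma beta_factor (p : ℕ) (hp : 1 < p) :
    1 - ((p : ℝ) ^ ((1 : ℝ) / 3) + 1) / (p * ((p : ℝ) + 1)) =
      ((1 + bp p) * (1 - (p : ℝ) ^ (-(5 / 3) : ℝ))⁻¹)⁻¹ := by
  obtain ⟨x, hx, h3, h1, h4, h2, h5⟩ := exists_cbrt p hp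
  unfold bp
  rw [h1, h4, h2, h5, h3]
  have hx0 : 0 < x := by linarith
  have d5 : x ^ 5 - 1 ≠ 0 := (sub_pos.2 (one_lt_pow₀ hx (by norm_num))).ne'
  have f5 : 1 - (x ^ 5)⁻¹ = (x ^ 5 - 1) / x ^ 5 := by field_simp
  have fb : 1 + 1 / ((x ^ 3) ^ 2 + x ^ 4 + x ^ 3 + x ^ 2) =
      (x ^ 6 + x ^ 4 + x ^ 3 + x ^ 2 + 1) / (x ^ 2 * (x ^ 4 + x ^ 2 + x + 1)) := by
    field_simp
  rw [f5, fb, inv_div, div_mul_div_comm, inv_div]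
  field_simp
  ring

lemma tprod_beta :
    (∏' p : Nat.Primes, (1 - ((p : ℝ) ^ ((1 : ℝ) / 3) + 1) / (p * ((p : ℝ) + 1)))) =
      ((∑' n, sqfreeExt bp n) * (1 + bp 3) * zeta53)⁻¹ := by
  have h := (hasProd_one_add bp_nonneg bp_le).mul zeta53_spec.1
  have h1 := one_le_tsum_sqfreeExt bp_nonneg bp_le
  have h3 := bp_nonneg 3
  have hz := zeta53_spec.2
  have hne : (∑' n, sqfreeExt bp n) * (1 + bp 3) * zeta53 ≠ 0 := by positivity
  rw [← (h.inv₀ hne).tprod_eq]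
  exact tprod_congr fun p => beta_factor p p.2.one_lt

/-! ### Evaluation of the two series -/

lemma hasSum_alphak (sgn : ℤ) : HasSum (alphak sgn) (Cpm sgn / (12 * zeta3)) := by
  have hA : HasSum Ak (∑' n, sqfreeExt ap n) := hasSum_tsum_SFk ap_nonneg ap_le
  have h := ((hA.mul_left 29).add ((hasSum_shift hA).mul_left (1 / 4))).mul_left
    (Cpm sgn / (324 * zeta2))
  convert! h using 1
  have h2 := zeta2_spec.2.ne'
  have h3 := zeta3_spec.2.ne'
  have hS := tsum_ap
  have h13 : 1 + ap 3 = 13 / 12 := by norm_num [ap]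
  rw [h13] at hS
  field_simp
  rw [← hS]
  ring

lemma hasSum_betak (sgn : ℤ) :
    HasSum (betak sgn) (4 * zeta13 * Kpm sgn / (5 * gamma23 ^ 3 * zeta53)) := by
  have hB : HasSum Bk (∑' n, sqfreeExt bp n) := hasSum_tsum_SFk bp_nonneg bp_le
  have h := ((hB.mul_left (107 * (9 : ℝ) ^ ((1 : ℝ) / 3) - 35)).add
    ((hasSum_shift hB).mul_left ((9 : ℝ) ^ ((1 : ℝ) / 3) - 1))).mul_left
    ((4 * zeta13 * Kpm sgn) / (45 * (11 * (9 : ℝ) ^ ((1 : ℝ) / 3) - 3) * gamma23 ^ 3) *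
    (∏' p : Nat.Primes, (1 - ((p : ℝ) ^ ((1 : ℝ) / 3) + 1) / (p * ((p : ℝ) + 1)))))
  convert! h using 1
  rw [tprod_beta]
  have hS : (∑' n, sqfreeExt bp n) ≠ 0 := by
    linarith [one_le_tsum_sqfreeExt bp_nonneg bp_le]
  have hz := zeta53_spec.2.ne'
  have hG : gamma23 ≠ 0 := (Real.Gamma_pos_of_pos (by norm_num)).ne'
  obtain ⟨x, hx, hx3, hx1, hx4, hx2, -⟩ := exists_cbrt 3 (by norm_num)
  have hc : (9 : ℝ) ^ ((1 : ℝ) / 3) = x ^ 2 := by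
    rw [← hx2, show (9 : ℝ) = (3 : ℝ) ^ (2 : ℝ) by norm_num, ← Real.rpow_mul (by norm_num)]
    norm_num
  have hb : bp 3 = 1 / (12 + 3 * x + x ^ 2) := by
    unfold bp
    rw [hx4, hx2]
    push_cast at hx3 ⊢
    rw [show x ^ 4 = x * x ^ 3 by ring, ← hx3]
    ring
  rw [hc, hb]
  push_cast at hx3
  generalize (∑' n, sqfreeExt bp n) = S at *
  have hd : 11 * x ^ 2 - 3 ≠ 0 := by nlinarith
  have hx0 : 0 < x := by linarith
  have fb : 1 + 1 / (12 + 3 * x + x ^ 2) = (13 + 3 * x + x ^ 2) / (12 + 3 * x + x ^ 2) := by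
    field_simp
    ring
  -- Modulo `x³ = 3`, both sides reduce to `36 (35 x² + 6 x + 15)`.
  have key : 36 * (3 * x ^ 2 - 1) * (12 + 3 * x + x ^ 2) =
      9 * ((11 * x ^ 2 - 3) * (13 + 3 * x + x ^ 2)) := by
    linear_combination (-(9 * x + 27)) * hx3
  have hq : 13 + 3 * x + x ^ 2 ≠ 0 := by positivity
  have hr : 12 + 3 * x + x ^ 2 ≠ 0 := by positivity
  rw [fb]
  generalize 13 + 3 * x + x ^ 2 = q at *
  generalize 12 + 3 * x + x ^ 2 = r at *
  field_simp
  linear_combination (-(5 * zeta13 * Kpm sgn)) * key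

theorem refined_densities_sum_to_total (sgn : ℤ) (hsgn : sgn = 1 ∨ sgn = -1) :
    (Summable fun k : ℕ => |alphak sgn k|) ∧
    (Summable fun k : ℕ => |betak sgn k|) ∧
    (∑' k : ℕ, alphak sgn k) = Cpm sgn / (12 * zeta3) ∧
    (∑' k : ℕ, betak sgn k) = 4 * zeta13 * Kpm sgn / (5 * gamma23 ^ 3 * zeta53) := by
  have ha := hasSum_alphak sgn
  have hb := hasSum_betak sgn
  exact ⟨ha.summable.abs, hb.summable.abs, ha.tsum_eq, hb.tsum_eq⟩

end
end

section
/- For any ε > 0 and any positive function G with G(X) = o(log log X) as X → ∞, there exists a constant C_{G,ε} > 0 such that for all X > C_{G,ε}, Σ_{f > √X, f squarefree} f^{-2} · 3^{ω(f) G(X)} ≤ X^{-1/2 + ε}, where the sum is over squarefree positive integers f > √X and ω(f) denotes the number of distinct prime factors of f. -/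
/-!
Write `K = 3 ^ G(X)`, so the summand is `f⁻² K ^ ω(f)`. For `η > 0` put `z = K ^ (1/η)`. At most `z`
primes dividing `f` are `≤ z`, and each prime `p > z` satisfies `K ≤ p ^ η`; hence
`K ^ ω(f) ≤ K ^ z * f ^ η` (`pow_card_primeFactors_le`). Since `G(X) = o(log log X)`, eventually
`K ^ (2/η) ≤ log X`, which gives `K ^ z ≤ X ^ η` (`rpow_rpow_le_of_le`). So for `f > √X` the summand is
at most `X ^ η * f ^ (-2+η) ≤ X ^ (2η-1/2) * f ^ (-1-η)`, and summing over `f` costs only the constant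
`∑ f ^ (-1-η)`, which is at most `X ^ η` for large `X`. Taking `η ≤ ε/3` finishes the proof.
-/

open scoped Classical

noncomputable section

/-- Primes dividing `f` are split at `z = K ^ (1/η)`: there are at most `z` small ones, and the
large ones satisfy `K ≤ p ^ η`. -/
lemma pow_card_primeFactors_le (K η : ℝ) (hK : 1 ≤ K) (hη : 0 < η) (f : ℕ) (hf : f ≠ 0) :
    K ^ f.primeFactors.card ≤ K ^ (K ^ (1 / η)) * (f : ℝ) ^ η := by
  have hK0 : 0 < K := by linarith
  set z : ℝ := K ^ (1 / η) with hz
  have hz0 : 0 ≤ z := by positivity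
  have hzη : z ^ η = K := by
    rw [hz, ← Real.rpow_mul hK0.le]
    field_simp
    simp
  rw [← Finset.prod_const, ← Finset.prod_filter_mul_prod_filter_not f.primeFactors
    (fun p : ℕ => (p : ℝ) ≤ z)]
  refine mul_le_mul ?_ ?_ (by positivity) (by positivity)
  · rw [Finset.prod_const, ← Real.rpow_natCast]
    apply Real.rpow_le_rpow_of_exponent_le hK
    have hsub : (f.primeFactors.filter fun p : ℕ => (p : ℝ) ≤ z) ⊆ Finset.Icc 1 ⌊z⌋₊ := by
      intro p hp
      rw [Finset.mem_filter] at hp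
      rw [Finset.mem_Icc]
      exact ⟨(Nat.prime_of_mem_primeFactors hp.1).one_le, Nat.le_floor hp.2⟩
    have hcard := Finset.card_le_card hsub
    rw [Nat.card_Icc, Nat.add_sub_cancel] at hcard
    exact le_trans (by exact_mod_cast hcard) (Nat.floor_le hz0)
  · calc ∏ p ∈ f.primeFactors with ¬((p : ℕ) : ℝ) ≤ z, K
        ≤ ∏ p ∈ f.primeFactors with ¬((p : ℕ) : ℝ) ≤ z, (p : ℝ) ^ η := by
          refine Finset.prod_le_prod (fun _ _ => hK0.le) fun p hp => ?_
          rw [Finset.mem_filter, not_le] at hp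
          rw [← hzη]
          exact Real.rpow_le_rpow hz0 hp.2.le hη.le
      _ ≤ ∏ p ∈ f.primeFactors, (p : ℝ) ^ η := by
          refine Finset.prod_le_prod_of_subset_of_one_le (Finset.filter_subset _ _)
            (fun _ _ => by positivity) fun p hp _ => ?_
          exact Real.one_le_rpow
            (by exact_mod_cast (Nat.prime_of_mem_primeFactors hp).one_le) hη.le
      _ = ((∏ p ∈ f.primeFactors, p : ℕ) : ℝ) ^ η := by
          rw [Real.finsetProd_rpow _ _ (fun _ _ => by positivity), Nat.cast_prod]
      _ ≤ (f : ℝ) ^ η := by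
          refine Real.rpow_le_rpow (by positivity) ?_ hη.le
          exact_mod_cast Nat.le_of_dvd (Nat.pos_of_ne_zero hf) (Nat.prod_primeFactors_dvd f)

/-- The factor contributed by the small primes is at most `X ^ η` once `K ^ (2/η) ≤ log X`. -/
lemma rpow_rpow_le_of_le (K η X : ℝ) (hK : 1 ≤ K) (hη : 0 < η) (hX : 0 < X)
    (h : K ^ (1 / η) * K ^ (1 / η) ≤ Real.log X) :
    K ^ (K ^ (1 / η)) ≤ X ^ η := by
  have hK0 : 0 < K := by linarith
  have hz : 0 < K ^ (1 / η) := by positivity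
  have hlog : Real.log K ≤ η * K ^ (1 / η) := by
    have h1 := Real.log_le_self hz.le
    rw [Real.log_rpow hK0, one_div, inv_mul_le_iff₀ hη] at h1
    simpa using h1
  rw [Real.rpow_def_of_pos hK0, Real.rpow_def_of_pos hX, Real.exp_le_exp]
  nlinarith [mul_le_mul_of_nonneg_right hlog hz.le, mul_le_mul_of_nonneg_left h hη.le]

open Asymptotics Filter in
theorem tail_sum_three_pow_omega_bound (ε : ℝ) (hε : 0 < ε) (G : ℝ → ℝ)
    (hGpos : ∀ X : ℝ, 0 < G X)
    (hGo : G =o[atTop] fun X : ℝ => Real.log (Real.log X)) :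
    ∃ CGε : ℝ, 0 < CGε ∧ ∀ X : ℝ, CGε < X →
      (Summable fun f : {f : ℕ // Squarefree f ∧ Real.sqrt X < (f : ℝ)} =>
        ((f : ℕ) : ℝ) ^ (-2 : ℝ) * (3 : ℝ) ^ (((f : ℕ).primeFactors.card : ℝ) * G X)) ∧
      (∑' f : {f : ℕ // Squarefree f ∧ Real.sqrt X < (f : ℝ)},
          ((f : ℕ) : ℝ) ^ (-2 : ℝ) * (3 : ℝ) ^ (((f : ℕ).primeFactors.card : ℝ) * G X))
        ≤ X ^ (-(1 : ℝ) / 2 + ε) := by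
  obtain ⟨η, hη, hηε, hη2⟩ : ∃ η : ℝ, 0 < η ∧ 3 * η ≤ ε ∧ 2 * η ≤ 1 :=
    ⟨min (ε / 3) (1 / 2), by positivity, by linarith [min_le_left (ε / 3) (1 / 2 : ℝ)],
      by linarith [min_le_right (ε / 3) (1 / 2 : ℝ)]⟩
  have hl3 : 0 < Real.log 3 := Real.log_pos (by norm_num)
  have hsum : Summable fun n : ℕ => (n : ℝ) ^ (-1 - η) :=
    Real.summable_nat_rpow.2 (by linarith)
  set Z : ℝ := ∑' n : ℕ, (n : ℝ) ^ (-1 - η) with hZ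
  -- `c` is chosen so that `G X ≤ c * log (log X)` says exactly `3 ^ (2 * G X / η) ≤ log X`.
  have hev1 := hGo.def (c := η / (2 * Real.log 3)) (by positivity)
  have hev2 := (tendsto_rpow_atTop hη).eventually_ge_atTop Z
  have hev3 := Real.tendsto_log_atTop.eventually_ge_atTop 1
  obtain ⟨C, hC⟩ := eventually_atTop.1 (hev1.and (hev2.and hev3))
  refine ⟨max C 1, by positivity, fun X hX => ?_⟩
  obtain ⟨hG, hZX, hlogX⟩ := hC X ((le_max_left _ _).trans hX.le)
  have hX1 : 1 < X := (le_max_right _ _).trans_lt hX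
  have hX0 : 0 < X := by linarith
  rw [Real.norm_of_nonneg (hGpos X).le, Real.norm_of_nonneg (Real.log_nonneg hlogX)] at hG
  set K : ℝ := (3 : ℝ) ^ G X with hKdef
  have hK : 1 ≤ K := Real.one_le_rpow (by norm_num) (hGpos X).le
  have hKX : K ^ (K ^ (1 / η)) ≤ X ^ η := by
    refine rpow_rpow_le_of_le K η X hK hη hX0 ?_
    rw [← Real.rpow_add (by linarith), hKdef, ← Real.rpow_mul (by norm_num),
      Real.rpow_def_of_pos (by norm_num)]
    rw [← Real.le_log_iff_exp_le (by linarith)]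
    calc Real.log 3 * (G X * (1 / η + 1 / η)) = G X * (2 * Real.log 3 / η) := by ring
      _ ≤ (η / (2 * Real.log 3) * Real.log (Real.log X)) * (2 * Real.log 3 / η) := by gcongr
      _ = Real.log (Real.log X) := by field_simp
  have hterm : ∀ f : {f : ℕ // Squarefree f ∧ Real.sqrt X < (f : ℝ)},
      ((f : ℕ) : ℝ) ^ (-2 : ℝ) * (3 : ℝ) ^ (((f : ℕ).primeFactors.card : ℝ) * G X)
        ≤ X ^ (2 * η - 1 / 2) * ((f : ℕ) : ℝ) ^ (-1 - η) := by
    rintro ⟨f, hsq, hf⟩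
    have hs0 : 0 < Real.sqrt X := Real.sqrt_pos.2 hX0
    have hf0 : (0 : ℝ) < f := hs0.trans hf
    have hpow : (3 : ℝ) ^ ((f.primeFactors.card : ℝ) * G X) = K ^ f.primeFactors.card := by
      rw [mul_comm, Real.rpow_mul (by norm_num), Real.rpow_natCast]
    have htail : (f : ℝ) ^ (2 * η - 1) ≤ X ^ (η - 1 / 2) := by
      have h1 := Real.rpow_le_rpow_of_nonpos hs0 hf.le (by linarith : 2 * η - 1 ≤ 0)
      rw [Real.sqrt_eq_rpow, ← Real.rpow_mul hX0.le] at h1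
      convert h1 using 2
      ring
    change (f : ℝ) ^ (-2 : ℝ) * (3 : ℝ) ^ ((f.primeFactors.card : ℝ) * G X) ≤ _
    rw [hpow]
    calc (f : ℝ) ^ (-2 : ℝ) * K ^ f.primeFactors.card
        ≤ (f : ℝ) ^ (-2 : ℝ) * (X ^ η * (f : ℝ) ^ η) := by
          gcongr
          exact (pow_card_primeFactors_le K η hK hη f hsq.ne_zero).trans (by gcongr)
      _ = X ^ η * ((f : ℝ) ^ (2 * η - 1) * (f : ℝ) ^ (-1 - η)) := by
          rw [mul_left_comm, ← Real.rpow_add hf0, ← Real.rpow_add hf0]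
          ring_nf
      _ ≤ X ^ η * (X ^ (η - 1 / 2) * (f : ℝ) ^ (-1 - η)) := by gcongr
      _ = X ^ (2 * η - 1 / 2) * (f : ℝ) ^ (-1 - η) := by
          rw [← mul_assoc, ← Real.rpow_add hX0]
          ring_nf
  have hsub : Summable fun f : {f : ℕ // Squarefree f ∧ Real.sqrt X < (f : ℝ)} =>
      ((f : ℕ) : ℝ) ^ (-1 - η) := hsum.comp_injective Subtype.val_injective
  have hmaj := hsub.mul_left (X ^ (2 * η - 1 / 2))
  have hS := Summable.of_nonneg_of_le (fun f => by positivity) hterm hmaj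
  refine ⟨hS, (hS.tsum_le_tsum hterm hmaj).trans ?_⟩
  rw [tsum_mul_left]
  have hle : ∑' f : {f : ℕ // Squarefree f ∧ Real.sqrt X < (f : ℝ)}, ((f : ℕ) : ℝ) ^ (-1 - η)
      ≤ Z :=
    hsum.tsum_subtype_le (fun n : ℕ => (n : ℝ) ^ (-1 - η))
      {f : ℕ | Squarefree f ∧ Real.sqrt X < (f : ℝ)} (fun _ => by positivity)
  calc X ^ (2 * η - 1 / 2) * _ ≤ X ^ (2 * η - 1 / 2) * X ^ η := by
        gcongr
        exact hle.trans hZX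
    _ = X ^ (3 * η - 1 / 2) := by
        rw [← Real.rpow_add hX0]
        ring_nf
    _ ≤ X ^ (-(1 : ℝ) / 2 + ε) :=
        Real.rpow_le_rpow_of_exponent_le hX1.le (by linarith)

end
end
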